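/- Full domain and Lipschitz continuity of the resolvent-type operator built from a partial inverse (Lemma B.5). Let f: ℝ^m → ℝ be μ-strongly convex and M-smooth (0 < μ ≤ M < ∞), let r ≥ 0, and define F: ℝ^{r+m} → ℝ by F(w, x) = ½‖w‖² + f(x), so ∇F(w, x) = (w, ∇f(x)). Let Q ∈ ℝ^{(r+m)×(r+m)} be a permutation matrix, H₀ ∈ ℝ^{(r+m)×(r+m)} a skew-symmetric matrix, J ∈ ℝ^{(r+m)×(r+m)} a diagonal matrix with entries in {0,1}, and K = range(J). Let T be the set-valued operator T(w) = { Q u − H₀ w : u ∈ (∇F)_K (Qᵀ w) }, where (∇F)_K is the partial inverse of ∇F with respect to K. Then: (i) T is surjective, i.e., the inverse operator T^{−1} has domain all of ℝ^{r+m}; and (ii) T^{−1} is single-valued, Lipschitz continuous, and monotone. -/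

import Mathlib

open Matrix

/-- The continuous linear map `h ↦ ⟨g, h⟩` on `ℝ^m` (Euclidean inner product). -/
noncomputable def dotCLM {m : ℕ} (g : Fin m → ℝ) : (Fin m → ℝ) →L[ℝ] ℝ :=
  ∑ k, g k • ContinuousLinearMap.proj k

/-- `g` is the (Euclidean) gradient of `f` everywhere. -/
def HasGradient {m : ℕ} (f : (Fin m → ℝ) → ℝ) (g : (Fin m → ℝ) → Fin m → ℝ) : Prop :=
  ∀ x, HasFDerivAt f (dotCLM (g x)) x

/-- `f` is `μ`-strongly convex: `f − (μ/2)‖·‖²` is convex. -/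
def StronglyConvexFun {m : ℕ} (μ : ℝ) (f : (Fin m → ℝ) → ℝ) : Prop :=
  ConvexOn ℝ Set.univ (fun x => f x - μ / 2 * (x ⬝ᵥ x))

/-- The gradient `g` is `M`-Lipschitz (squared Euclidean form). -/
def GradLipschitz {m : ℕ} (M : ℝ) (g : (Fin m → ℝ) → Fin m → ℝ) : Prop :=
  ∀ x z : Fin m → ℝ, (g x - g z) ⬝ᵥ (g x - g z) ≤ M ^ 2 * ((x - z) ⬝ᵥ (x - z))

/-- The gradient of `F(w, x) = ½‖w‖² + f(x)` on `ℝ^{r+m} = ℝ^r × ℝ^m`,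
namely `∇F(w, x) = (w, ∇f(x))`, with `g = ∇f`. -/
def gradF {r m : ℕ} (g : (Fin m → ℝ) → Fin m → ℝ)
    (z : Fin r ⊕ Fin m → ℝ) : Fin r ⊕ Fin m → ℝ :=
  Sum.elim (fun a => z (Sum.inl a)) (fun c => g (fun e => z (Sum.inr e)) c)

/-- The graph of the operator `T(w) = { Q u − H₀ w : u ∈ (∇F)_K (Qᵀ w) }`,
where `K = range J` for a 0/1 diagonal matrix `J` (so `Π_K z = J z` and
`Π_{K⊥} z = (I − J) z`), and `(∇F)_K` is the partial inverse of `∇F` with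
respect to `K`. -/
def TGraph {r m : ℕ} (g : (Fin m → ℝ) → Fin m → ℝ)
    (J : Fin r ⊕ Fin m → ℝ)
    (Q H0 : Matrix (Fin r ⊕ Fin m) (Fin r ⊕ Fin m) ℝ)
    (w b : Fin r ⊕ Fin m → ℝ) : Prop :=
  ∃ x : Fin r ⊕ Fin m → ℝ,
    Q.transpose.mulVec w = (fun l => J l * x l + (1 - J l) * gradF g x l) ∧
    b = Q.mulVec (fun l => J l * gradF g x l + (1 - J l) * x l) - H0.mulVec w


theorem zar_hilbert {E : Type*} [NormedAddCommGroup E] [InnerProductSpace ℝ E] [CompleteSpace E]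
    (A : E → E) (ν C : ℝ) (hν : 0 < ν)
    (hm : ∀ x z, ν * ‖x - z‖ ^ 2 ≤ inner ℝ (A x - A z) (x - z))
    (hL : ∀ x z, ‖A x - A z‖ ^ 2 ≤ C * ‖x - z‖ ^ 2) : Function.Surjective A := by
  intro c
  obtain ⟨D, hD1, hD2, hD0⟩ : ∃ D : ℝ, C ≤ D ∧ ν ^ 2 ≤ D ∧ 0 < D :=
    ⟨max C (ν ^ 2), le_max_left _ _, le_max_right _ _, lt_of_lt_of_le (by positivity) (le_max_right _ _)⟩
  let t := ν / D
  have ht : 0 < t := by positivity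
  have htD : t * D = ν := by simp only [t]; field_simp
  have hq0 : 0 ≤ 1 - t * ν := by
    have : t * ν ≤ 1 := by
      simp only [t]; rw [div_mul_eq_mul_div, div_le_one hD0]; nlinarith
    linarith
  have hq1 : 1 - t * ν < 1 := by nlinarith [mul_pos ht hν]
  let k : NNReal := ⟨Real.sqrt (1 - t * ν), Real.sqrt_nonneg _⟩
  have hk : ContractingWith k (fun x => x - t • (A x - c)) := by
    constructor
    · rw [← NNReal.coe_lt_coe]
      show Real.sqrt (1 - t * ν) < 1
      rw [Real.sqrt_lt' one_pos]; simpa using hq1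
    · apply LipschitzWith.of_dist_le_mul
      intro x z
      rw [dist_eq_norm, dist_eq_norm]
      show _ ≤ Real.sqrt (1 - t * ν) * _
      apply le_of_sq_le_sq _ (by positivity)
      rw [mul_pow, Real.sq_sqrt hq0]
      have e : (x - t • (A x - c)) - (z - t • (A z - c)) = (x - z) - t • (A x - A z) := by
        simp only [smul_sub]; abel
      rw [e, norm_sub_sq_real, norm_smul, inner_smul_right, mul_pow, Real.norm_eq_abs, sq_abs,
        real_inner_comm]
      have h1 := mul_le_mul_of_nonneg_left (hm x z) ht.le
      have h2 : ‖A x - A z‖ ^ 2 ≤ D * ‖x - z‖ ^ 2 :=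
        (hL x z).trans (mul_le_mul_of_nonneg_right hD1 (by positivity))
      have h3 := mul_le_mul_of_nonneg_left h2 (sq_nonneg t)
      have h4 : t ^ 2 * (D * ‖x - z‖ ^ 2) = t * ν * ‖x - z‖ ^ 2 := by
        rw [← htD]; ring
      linarith
  refine ⟨hk.fixedPoint, ?_⟩
  have h := hk.fixedPoint_isFixedPt
  have h' : t • (A hk.fixedPoint - c) = 0 := by
    have := h.eq
    simpa using this
  have := (smul_eq_zero.mp h').resolve_left ht.ne'
  exact sub_eq_zero.mp this

theorem zar_dot {ι : Type*} [Fintype ι] (A : (ι → ℝ) → (ι → ℝ)) (ν C : ℝ) (hν : 0 < ν)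
    (hm : ∀ x z, ν * ((x - z) ⬝ᵥ (x - z)) ≤ (A x - A z) ⬝ᵥ (x - z))
    (hL : ∀ x z, (A x - A z) ⬝ᵥ (A x - A z) ≤ C * ((x - z) ⬝ᵥ (x - z))) :
    Function.Surjective A := by
  have key : ∀ u v : EuclideanSpace ℝ ι, inner ℝ u v = u.ofLp ⬝ᵥ v.ofLp := by
    intro u v
    simp [PiLp.inner_apply, dotProduct, mul_comm]
  have hs := zar_hilbert (E := EuclideanSpace ℝ ι) (fun x => WithLp.toLp 2 (A x.ofLp)) ν C hν
    (by intro x z; rw [← real_inner_self_eq_norm_sq, key, key]; exact hm _ _)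
    (by intro x z; rw [← real_inner_self_eq_norm_sq, ← real_inner_self_eq_norm_sq, key, key]
        exact hL _ _)
  intro c
  obtain ⟨x, hx⟩ := hs (WithLp.toLp 2 c)
  exact ⟨x.ofLp, by simpa using hx⟩

theorem dotCLM_apply' {m : ℕ} (g h : Fin m → ℝ) : dotCLM g h = g ⬝ᵥ h := by
  simp [dotCLM, dotProduct]

theorem grad_strong_mono {m : ℕ} (μ : ℝ) (f : (Fin m → ℝ) → ℝ) (g : (Fin m → ℝ) → Fin m → ℝ)
    (hgrad : HasGradient f g) (hsc : StronglyConvexFun μ f) (x z : Fin m → ℝ) :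
    μ * ((x - z) ⬝ᵥ (x - z)) ≤ (g x - g z) ⬝ᵥ (x - z) := by
  let d := x - z
  let h : ℝ → ℝ := fun t => f (z + t • d) - μ / 2 * ((z + t • d) ⬝ᵥ (z + t • d))
  have hconv : ConvexOn ℝ Set.univ h := by
    have := hsc.comp_affineMap (AffineMap.lineMap z x)
    simp only [Set.preimage_univ] at this
    have e : h = (fun x => f x - μ / 2 * (x ⬝ᵥ x)) ∘ (AffineMap.lineMap z x : ℝ →ᵃ[ℝ] _) := by
      funext t
      simp [h, d, AffineMap.lineMap_apply, add_comm]
    rw [e]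
    exact this
  have hder : ∀ t : ℝ, HasDerivAt h (g (z + t • d) ⬝ᵥ d - μ * ((z + t • d) ⬝ᵥ d)) t := by
    intro t
    have hl : HasDerivAt (fun t : ℝ => z + t • d) d t := by
      simpa using ((hasDerivAt_id t).smul_const d).const_add z
    have h1 := (hgrad (z + t • d)).comp_hasDerivAt t hl
    rw [dotCLM_apply'] at h1
    have h2 : HasDerivAt (fun t : ℝ => z ⬝ᵥ z + t * (2 * (z ⬝ᵥ d)) + t ^ 2 * (d ⬝ᵥ d))
        (1 * (2 * (z ⬝ᵥ d)) + (2 * t) * (d ⬝ᵥ d)) t := by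
      have := (((hasDerivAt_id t).mul_const (2 * (z ⬝ᵥ d))).const_add (z ⬝ᵥ z)).add
        (((hasDerivAt_id t).pow 2).mul_const (d ⬝ᵥ d))
      refine HasDerivAt.congr_deriv this ?_
      simp
    have h3 := h1.sub (h2.const_mul (μ / 2))
    have eh : h = (f ∘ fun t : ℝ => z + t • d) - fun y : ℝ =>
        μ / 2 * (z ⬝ᵥ z + y * (2 * (z ⬝ᵥ d)) + y ^ 2 * (d ⬝ᵥ d)) := by
      funext t
      simp only [h, Pi.sub_apply, Function.comp_apply, add_dotProduct, dotProduct_add,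
        smul_dotProduct, dotProduct_smul, smul_eq_mul, dotProduct_comm d z]
      ring
    rw [eh]
    refine HasDerivAt.congr_deriv h3 ?_
    simp only [add_dotProduct, smul_dotProduct, smul_eq_mul]
    ring
  have a := hconv.le_slope_of_hasDerivAt (Set.mem_univ 0) (Set.mem_univ 1) one_pos (hder 0)
  have b := hconv.slope_le_of_hasDerivAt (Set.mem_univ 0) (Set.mem_univ 1) one_pos (hder 1)
  have c := a.trans b
  have e : z + d = x := by simp [d]
  simp only [zero_smul, add_zero, one_smul, e] at c
  change μ * (d ⬝ᵥ d) ≤ (g x - g z) ⬝ᵥ d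
  have e2 : d ⬝ᵥ d = x ⬝ᵥ d - z ⬝ᵥ d := by rw [← sub_dotProduct]
  rw [e2, sub_dotProduct (g x) (g z)]
  linarith

theorem dot_self_nonneg' {ι : Type*} [Fintype ι] (v : ι → ℝ) : 0 ≤ v ⬝ᵥ v :=
  Finset.sum_nonneg fun _ _ => mul_self_nonneg _

theorem dot_comb {ι : Type*} [Fintype ι] (a c : ℝ) (u v : ι → ℝ) :
    2 * (a * c) * (u ⬝ᵥ v) ≤ a ^ 2 * (u ⬝ᵥ u) + c ^ 2 * (v ⬝ᵥ v) := by
  have := dot_self_nonneg' (a • u - c • v)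
  simp only [sub_dotProduct, dotProduct_sub, smul_dotProduct, dotProduct_smul, smul_eq_mul,
    dotProduct_comm v u] at this
  nlinarith

theorem sub_sq_le' {ι : Type*} [Fintype ι] (u v : ι → ℝ) :
    (u - v) ⬝ᵥ (u - v) ≤ 2 * (u ⬝ᵥ u) + 2 * (v ⬝ᵥ v) := by
  have := dot_self_nonneg' (u + v)
  simp only [sub_dotProduct, dotProduct_sub, add_dotProduct, dotProduct_add,
    dotProduct_comm v u] at *
  linarith

theorem mulVec_bdd {ι : Type*} [Fintype ι] (H : Matrix ι ι ℝ) :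
    ∃ C : ℝ, 0 ≤ C ∧ ∀ v, (H *ᵥ v) ⬝ᵥ (H *ᵥ v) ≤ C * (v ⬝ᵥ v) := by
  refine ⟨∑ i, ∑ j, H i j ^ 2, by positivity, fun v => ?_⟩
  rw [Finset.sum_mul]
  apply Finset.sum_le_sum
  intro i _
  have := Finset.sum_mul_sq_le_sq_mul_sq Finset.univ (H i) v
  simp only [mulVec, dotProduct, ← sq]
  exact this

theorem gradF_props {r m : ℕ} (μ M : ℝ) (g : (Fin m → ℝ) → Fin m → ℝ) (hμ : 0 < μ)
    (hg : ∀ x z, μ * ((x - z) ⬝ᵥ (x - z)) ≤ (g x - g z) ⬝ᵥ (x - z))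
    (hsm : GradLipschitz M g) :
    ∃ ν L : ℝ, 0 < ν ∧ ν ≤ 1 ∧ 0 < L ∧ ∀ x z : Fin r ⊕ Fin m → ℝ,
      ν * ((x - z) ⬝ᵥ (x - z)) ≤ (gradF g x - gradF g z) ⬝ᵥ (x - z) ∧
      (gradF g x - gradF g z) ⬝ᵥ (gradF g x - gradF g z) ≤ L * ((x - z) ⬝ᵥ (x - z)) := by
  refine ⟨min 1 μ, max 1 (M ^ 2), lt_min one_pos hμ, min_le_left _ _,
    lt_of_lt_of_le one_pos (le_max_left _ _), fun x z => ?_⟩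
  have split : ∀ u v : Fin r ⊕ Fin m → ℝ, u ⬝ᵥ v =
      (fun a => u (Sum.inl a)) ⬝ᵥ (fun a => v (Sum.inl a)) +
      (fun a => u (Sum.inr a)) ⬝ᵥ (fun a => v (Sum.inr a)) := by
    intro u v; simp [dotProduct, Fintype.sum_sum_type]
  have h1 := hg (fun e => x (Sum.inr e)) (fun e => z (Sum.inr e))
  have h2 := hsm (fun e => x (Sum.inr e)) (fun e => z (Sum.inr e))
  have e1 : (fun a => (gradF g x - gradF g z) (Sum.inl a)) =
    (fun a => (x - z) (Sum.inl a)) := by funext a; simp [gradF]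
  have e2 : (fun a => (gradF g x - gradF g z) (Sum.inr a)) =
    g (fun e => x (Sum.inr e)) - g (fun e => z (Sum.inr e)) := by funext a; simp [gradF]
  have e3 : (fun a => (x - z) (Sum.inr a)) =
    (fun e => x (Sum.inr e)) - (fun e => z (Sum.inr e)) := by funext a; simp
  rw [split (gradF g x - gradF g z) (gradF g x - gradF g z), split (x - z) (x - z),
    split (gradF g x - gradF g z), e1, e2, e3]
  have n1 := dot_self_nonneg' (fun a => (x - z) (Sum.inl a))
  have n2 := dot_self_nonneg' ((fun e => x (Sum.inr e)) - (fun e => z (Sum.inr e)))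
  constructor
  · have := mul_le_mul_of_nonneg_right (min_le_left 1 μ) n1
    have := mul_le_mul_of_nonneg_right (min_le_right 1 μ) n2
    linarith
  · have := mul_le_mul_of_nonneg_right (le_max_left 1 (M ^ 2)) n1
    have := mul_le_mul_of_nonneg_right (le_max_right 1 (M ^ 2)) n2
    linarith

theorem partial_surj {ι : Type*} [Fintype ι] (G : (ι → ℝ) → ι → ℝ) (ν L : ℝ) (hν : 0 < ν)
    (hν1 : ν ≤ 1) (hL0 : 0 < L)
    (hG : ∀ x z, ν * ((x - z) ⬝ᵥ (x - z)) ≤ (G x - G z) ⬝ᵥ (x - z) ∧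
      (G x - G z) ⬝ᵥ (G x - G z) ≤ L * ((x - z) ⬝ᵥ (x - z)))
    (J : ι → ℝ) (hJ : ∀ l, J l = 0 ∨ J l = 1) (y : ι → ℝ) :
    ∃ x, y = fun l => J l * x l + (1 - J l) * G x l := by
  let s : (ι → ℝ) → ι → ℝ := fun x l => J l * y l + (1 - J l) * x l
  have hs := zar_dot (fun x l => J l * x l + (1 - J l) * G (s x) l) ν (1 + L) hν ?_ ?_
  · obtain ⟨x, hx⟩ := hs y
    have e : s x = x := by
      funext l
      have := congrFun hx l
      simp only [s] at this ⊢
      rcases hJ l with h | h <;> simp [h] at this ⊢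
      exact this.symm
    simp only [e] at hx
    exact ⟨x, hx.symm⟩
  · intro x z
    have h := (hG (s x) (s z)).1
    have k : ν * ((x - z) ⬝ᵥ (x - z)) - ν * ((s x - s z) ⬝ᵥ (s x - s z)) ≤
      ((fun l => J l * x l + (1 - J l) * G (s x) l) - (fun l => J l * z l + (1 - J l) * G (s z) l))
        ⬝ᵥ (x - z) - (G (s x) - G (s z)) ⬝ᵥ (s x - s z) := by
      simp only [dotProduct, Finset.mul_sum, ← Finset.sum_sub_distrib]
      apply Finset.sum_le_sum
      intro l _
      simp only [Pi.sub_apply]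
      have e : s x l - s z l = (1 - J l) * (x l - z l) := by simp only [s]; ring
      rw [e]
      rcases hJ l with h | h <;> rw [h]
      · apply le_of_eq; ring
      · nlinarith [mul_self_nonneg (x l - z l)]
    linarith
  · intro x z
    have h := (hG (s x) (s z)).2
    have k1 : (s x - s z) ⬝ᵥ (s x - s z) ≤ (x - z) ⬝ᵥ (x - z) := by
      apply Finset.sum_le_sum
      intro l _
      simp only [Pi.sub_apply]
      have e : s x l - s z l = (1 - J l) * (x l - z l) := by simp only [s]; ring
      rw [e]
      rcases hJ l with h | h <;> rw [h]
      · apply le_of_eq; ring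
      · nlinarith [mul_self_nonneg (x l - z l)]
    have k2 := mul_le_mul_of_nonneg_left k1 hL0.le
    have k : ((fun l => J l * x l + (1 - J l) * G (s x) l) -
          (fun l => J l * z l + (1 - J l) * G (s z) l)) ⬝ᵥ
        ((fun l => J l * x l + (1 - J l) * G (s x) l) -
          (fun l => J l * z l + (1 - J l) * G (s z) l)) ≤
        (x - z) ⬝ᵥ (x - z) + (G (s x) - G (s z)) ⬝ᵥ (G (s x) - G (s z)) := by
      simp only [dotProduct, ← Finset.sum_add_distrib]
      apply Finset.sum_le_sum
      intro l _
      simp only [Pi.sub_apply]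
      rcases hJ l with h | h <;> rw [h] <;>
        nlinarith [mul_self_nonneg (x l - z l), mul_self_nonneg (G (s x) l - G (s z) l)]
    linarith

/-- **Full domain and Lipschitz continuity of the resolvent-type operator built
from a partial inverse (Lemma B.5).**  With `f` `μ`-strongly convex and
`M`-smooth, `F(w,x) = ½‖w‖² + f(x)`, `Q` a permutation matrix, `H₀`
skew-symmetric, and `K = range J`: the operator `T` is surjective, and `T⁻¹` is
single-valued, Lipschitz continuous, and monotone. -/
theorem partial_inverse_resolvent_full_domain {r m : ℕ} (μ M : ℝ)
    (hμ : 0 < μ) (hμM : μ ≤ M)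
    (f : (Fin m → ℝ) → ℝ) (g : (Fin m → ℝ) → Fin m → ℝ)
    (hgrad : HasGradient f g)
    (hsc : StronglyConvexFun μ f) (hsm : GradLipschitz M g)
    (J : Fin r ⊕ Fin m → ℝ) (hJ : ∀ l, J l = 0 ∨ J l = 1)
    (Q : Matrix (Fin r ⊕ Fin m) (Fin r ⊕ Fin m) ℝ)
    (hQ : ∃ ep : Equiv.Perm (Fin r ⊕ Fin m), ∀ a b, Q a b = if b = ep a then 1 else 0)
    (H0 : Matrix (Fin r ⊕ Fin m) (Fin r ⊕ Fin m) ℝ) (hH0 : H0.transpose = -H0) :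
    -- (i) `T` is surjective, i.e. `dom T⁻¹ = ℝ^{r+m}`
    (∀ b : Fin r ⊕ Fin m → ℝ, ∃ w, TGraph g J Q H0 w b) ∧
    -- (ii) `T⁻¹` is single-valued, Lipschitz continuous, and monotone
    (∀ b w₁ w₂, TGraph g J Q H0 w₁ b → TGraph g J Q H0 w₂ b → w₁ = w₂) ∧
    (∃ κ : ℝ, 0 ≤ κ ∧ ∀ w₁ b₁ w₂ b₂,
      TGraph g J Q H0 w₁ b₁ → TGraph g J Q H0 w₂ b₂ →
        (w₁ - w₂) ⬝ᵥ (w₁ - w₂) ≤ κ ^ 2 * ((b₁ - b₂) ⬝ᵥ (b₁ - b₂))) ∧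
    (∀ w₁ b₁ w₂ b₂,
      TGraph g J Q H0 w₁ b₁ → TGraph g J Q H0 w₂ b₂ →
        0 ≤ (w₁ - w₂) ⬝ᵥ (b₁ - b₂)) := by
  obtain ⟨ν, L, hν, hν1, hL0, hG⟩ := gradF_props (r := r) μ M g hμ
    (grad_strong_mono μ f g hgrad hsc) hsm
  obtain ⟨ep, hep⟩ := hQ
  have hQ1 : ∀ v, Q *ᵥ v = fun a => v (ep a) := by
    intro v; funext a; simp [mulVec, dotProduct, hep]
  have hQ2 : ∀ v, Qᵀ *ᵥ v = fun b => v (ep.symm b) := by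
    intro v; funext b
    have : ∀ a, (b = ep a) ↔ (a = ep.symm b) := by
      intro a; rw [Equiv.eq_symm_apply]; exact eq_comm
    simp [mulVec, dotProduct, hep, this]
  have hQdot : ∀ u v : Fin r ⊕ Fin m → ℝ, (Q *ᵥ u) ⬝ᵥ (Q *ᵥ v) = u ⬝ᵥ v := by
    intro u v
    rw [hQ1, hQ1]
    exact Equiv.sum_comp ep (fun a => u a * v a)
  have hQQ : ∀ v, Q *ᵥ (Qᵀ *ᵥ v) = v := by
    intro v; rw [hQ1, hQ2]; funext a; simp
  have hskew : ∀ v : Fin r ⊕ Fin m → ℝ, v ⬝ᵥ (H0 *ᵥ v) = 0 := by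
    intro v
    have : v ⬝ᵥ (H0 *ᵥ v) = -(v ⬝ᵥ (H0 *ᵥ v)) := by
      conv_lhs => rw [dotProduct_mulVec, ← mulVec_transpose, hH0, neg_mulVec, neg_dotProduct,
        dotProduct_comm]
    linarith
  obtain ⟨C, hC0, hC⟩ := mulVec_bdd H0
  have hex : ∀ w, ∃ b, TGraph g J Q H0 w b := by
    intro w
    obtain ⟨x, hx⟩ := partial_surj (gradF g) ν L hν hν1 hL0 hG J hJ (Qᵀ *ᵥ w)
    exact ⟨_, x, hx, rfl⟩
  have main : ∀ w₁ b₁ w₂ b₂, TGraph g J Q H0 w₁ b₁ → TGraph g J Q H0 w₂ b₂ →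
      ν / (1 + L) * ((w₁ - w₂) ⬝ᵥ (w₁ - w₂)) ≤ (b₁ - b₂) ⬝ᵥ (w₁ - w₂) ∧
      (b₁ - b₂) ⬝ᵥ (b₁ - b₂) ≤
        (2 * ((1 + L) * ((1 + L) / ν ^ 2)) + 2 * C) * ((w₁ - w₂) ⬝ᵥ (w₁ - w₂)) := by
    rintro w₁ b₁ w₂ b₂ ⟨x, hx, rfl⟩ ⟨z, hz, rfl⟩
    obtain ⟨p, hp⟩ : ∃ p, p = Qᵀ *ᵥ w₁ - Qᵀ *ᵥ w₂ := ⟨_, rfl⟩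
    obtain ⟨q, hq⟩ : ∃ q : Fin r ⊕ Fin m → ℝ, q = (fun l => J l * gradF g x l + (1 - J l) * x l) -
      (fun l => J l * gradF g z l + (1 - J l) * z l) := ⟨_, rfl⟩
    have hw : w₁ - w₂ = Q *ᵥ p := by rw [hp, mulVec_sub, hQQ, hQQ]
    have hb : Q *ᵥ (fun l => J l * gradF g x l + (1 - J l) * x l) - H0 *ᵥ w₁ -
        (Q *ᵥ (fun l => J l * gradF g z l + (1 - J l) * z l) - H0 *ᵥ w₂) =
        Q *ᵥ q - H0 *ᵥ (w₁ - w₂) := by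
      rw [hq, mulVec_sub, mulVec_sub]; abel
    rw [hb]
    have hww : (w₁ - w₂) ⬝ᵥ (w₁ - w₂) = p ⬝ᵥ p := by rw [hw, hQdot]
    have hbw : (Q *ᵥ q - H0 *ᵥ (w₁ - w₂)) ⬝ᵥ (w₁ - w₂) = p ⬝ᵥ q := by
      rw [sub_dotProduct, dotProduct_comm (H0 *ᵥ _), hskew, hw, hQdot, sub_zero, dotProduct_comm]
    have hbb := sub_sq_le' (Q *ᵥ q) (H0 *ᵥ (w₁ - w₂))
    rw [hQdot] at hbb
    have hH := hC (w₁ - w₂)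
    rw [hbw, hww]
    rw [hww] at hH
    rw [hx, hz] at hp
    obtain ⟨G1, G2⟩ := hG x z
    have i1 : p ⬝ᵥ q = (gradF g x - gradF g z) ⬝ᵥ (x - z) := by
      rw [hp, hq]
      apply Finset.sum_congr rfl
      intro l _
      simp only [Pi.sub_apply]
      rcases hJ l with h | h <;> rw [h] <;> ring
    have i2 : p ⬝ᵥ p + q ⬝ᵥ q = (gradF g x - gradF g z) ⬝ᵥ (gradF g x - gradF g z)
        + (x - z) ⬝ᵥ (x - z) := by
      rw [hp, hq]
      simp only [dotProduct, ← Finset.sum_add_distrib]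
      apply Finset.sum_congr rfl
      intro l _
      simp only [Pi.sub_apply]
      rcases hJ l with h | h <;> rw [h] <;> ring
    have np := dot_self_nonneg' p
    have nq := dot_self_nonneg' q
    have hpq := dot_comb (1 + L) ν p q
    generalize (x - z) ⬝ᵥ (x - z) = X at *
    generalize (gradF g x - gradF g z) ⬝ᵥ (gradF g x - gradF g z) = Y at *
    rw [← i1] at G1
    have hK : 0 < 1 + L := by linarith
    constructor
    · rw [div_mul_eq_mul_div, div_le_iff₀ hK]
      have : p ⬝ᵥ p ≤ (1 + L) * X := by linarith
      nlinarith
    · have hqX : q ⬝ᵥ q ≤ (1 + L) * X := by linarith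
      have s1 : ν ^ 2 * X ≤ (1 + L) * (p ⬝ᵥ p) := by
        have t1 := mul_le_mul_of_nonneg_left G1 (mul_pos hK hν).le
        have t2 := mul_le_mul_of_nonneg_left hqX (sq_nonneg ν)
        have t3 : (1 + L) * (ν ^ 2 * X) ≤ (1 + L) * ((1 + L) * (p ⬝ᵥ p)) := by nlinarith
        exact le_of_mul_le_mul_left t3 hK
      have s2 : X ≤ (1 + L) / ν ^ 2 * (p ⬝ᵥ p) := by
        rw [div_mul_eq_mul_div, le_div_iff₀ (by positivity)]; linarith
      have s3 := mul_le_mul_of_nonneg_left s2 hK.le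
      nlinarith
  have hc : 0 < ν / (1 + L) := by positivity
  have hlip : ∀ w₁ b₁ w₂ b₂, TGraph g J Q H0 w₁ b₁ → TGraph g J Q H0 w₂ b₂ →
      (w₁ - w₂) ⬝ᵥ (w₁ - w₂) ≤ (1 / (ν / (1 + L))) ^ 2 * ((b₁ - b₂) ⬝ᵥ (b₁ - b₂)) := by
    intro w₁ b₁ w₂ b₂ h1 h2
    have h := (main _ _ _ _ h1 h2).1
    generalize ν / (1 + L) = c at *
    have h3 := dot_comb 1 c (b₁ - b₂) (w₁ - w₂)
    rw [div_pow, one_pow, div_mul_eq_mul_div, le_div_iff₀ (by positivity)]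
    nlinarith [mul_le_mul_of_nonneg_left h hc.le]
  refine ⟨?_, ?_, ⟨1 / (ν / (1 + L)), by positivity, hlip⟩, ?_⟩
  · choose A hA using hex
    have hs := zar_dot A _ _ hc (fun x z => (main _ _ _ _ (hA x) (hA z)).1)
      (fun x z => (main _ _ _ _ (hA x) (hA z)).2)
    intro b
    obtain ⟨w, rfl⟩ := hs b
    exact ⟨w, hA w⟩
  · intro b w₁ w₂ h1 h2
    have h := hlip _ _ _ _ h1 h2
    rw [sub_self, zero_dotProduct, mul_zero] at h
    exact sub_eq_zero.mp (dotProduct_self_eq_zero.mp (le_antisymm h (dot_self_nonneg' _)))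
  · intro w₁ b₁ w₂ b₂ h1 h2
    rw [dotProduct_comm]
    exact (mul_nonneg hc.le (dot_self_nonneg' _)).trans (main _ _ _ _ h1 h2).1
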